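/- Evaluation lemma. Let 𝒢 be a polynomial in x₁, x₂, y₁, y₂ over a field of characteristic zero which is bihomogeneous of orders (p,q), let ℓ, m ≥ 0, and let σ denote the substitution x₁ ↦ u₁, y₁ ↦ u₁, x₂ ↦ u₂, y₂ ↦ u₂ into the two variables u₁, u₂. If ℓ ≥ m then σ(Ω_{xy}^ℓ((x y)^m · 𝒢)) = μ(p,q;ℓ,m) · σ(Ω_{xy}^{ℓ−m}𝒢), where μ(p,q;ℓ,m) = (ℓ!/(ℓ−m)!) · ((p+q−ℓ+2m+1)!/((p+q−ℓ+m+1)!)); if ℓ < m then σ(Ω_{xy}^ℓ((x y)^m · 𝒢)) = 0. -/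

import Mathlib

/-!
Let `E` be the Euler derivation. Multiplication by `(x y)` raises `E`-eigenvalues by `2`, `Ω`
lowers them by `2`, and `[Ω, (x y)] = E + 2`. Moving one bracket factor past `Ω^(j+1)` on an
`E`-eigenvector `H` of eigenvalue `c` therefore costs `∑_{i ≤ j} (c - 2i + 2) = (j + 1)(c + 2 - j)`
copies of `Ω^j H`, and `σ` kills the remaining term because it kills the bracket. Peeling off the
`m` bracket factors one at a time turns these costs into two falling factorials of length `m`.
-/

open MvPolynomial

/-- The Cayley Omega operator `Ω_{xy} = ∂²/∂x₁∂y₂ − ∂²/∂y₁∂x₂`, where the four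
variables are indexed as `x₁ = 0`, `x₂ = 1`, `y₁ = 2`, `y₂ = 3`. -/
noncomputable def Omega {k : Type*} [CommRing k] (G : MvPolynomial (Fin 4) k) :
    MvPolynomial (Fin 4) k :=
  pderiv (0 : Fin 4) (pderiv 3 G) - pderiv 2 (pderiv 1 G)

/-- The bracket factor `(x y) = x₁y₂ − y₁x₂`. -/
noncomputable def bracket {k : Type*} [CommRing k] : MvPolynomial (Fin 4) k :=
  X 0 * X 3 - X 2 * X 1

/-- A polynomial in `x₁, x₂, y₁, y₂` is bihomogeneous of orders `(p,q)` if it is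
homogeneous of degree `p` in `(x₁,x₂)` and of degree `q` in `(y₁,y₂)`. -/
def Bihomogeneous {k : Type*} [CommRing k] (G : MvPolynomial (Fin 4) k)
    (p q : ℕ) : Prop :=
  G.IsWeightedHomogeneous ![1, 1, 0, 0] p ∧ G.IsWeightedHomogeneous ![0, 0, 1, 1] q

/-- The substitution `σ : x₁ ↦ u₁, y₁ ↦ u₁, x₂ ↦ u₂, y₂ ↦ u₂`. -/
noncomputable def substU {k : Type*} [CommRing k] :
    MvPolynomial (Fin 4) k →ₐ[k] MvPolynomial (Fin 2) k :=
  aeval ![X 0, X 1, X 0, X 1]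

/-- `μ(p,q;ℓ,m) = (ℓ!/(ℓ−m)!)·((p+q−ℓ+2m+1)!/((p+q−ℓ+m+1)!))`. -/
noncomputable def mu (p q ℓ m : ℕ) : ℚ :=
  ((ℓ.factorial : ℚ) / ((ℓ - m).factorial : ℚ)) *
    (((p + q + 2 * m + 1 - ℓ).factorial : ℚ) / ((p + q + m + 1 - ℓ).factorial : ℚ))

section Euler

variable {R σ : Type*} [CommSemiring R]

/-- The Euler derivation `∑ i, X i * ∂/∂X i`, whose eigenvectors generalize the homogeneous
polynomials; it is encoded by its values `X i ↦ X i` on the variables. -/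
noncomputable def euler : Derivation R (MvPolynomial σ R) (MvPolynomial σ R) :=
  mkDerivation R X

@[simp]
lemma euler_X (i : σ) : euler (X i : MvPolynomial σ R) = X i :=
  mkDerivation_X R X i

lemma euler_monomial (s : σ →₀ ℕ) (a : R) :
    euler (monomial s a) = (s.degree : R) • monomial s a := by
  have hX (i : σ) (hi : i ∈ s.support) :
      monomial (s - Finsupp.single i 1) (s i : R) • (X i : MvPolynomial σ R) =
        (s i : R) • monomial s 1 := by
    have hle : Finsupp.single i 1 ≤ s := by
      simpa [Nat.one_le_iff_ne_zero] using hi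
    rw [smul_eq_mul, X, monomial_mul, mul_one, tsub_add_cancel_of_le hle, smul_monomial,
      smul_eq_mul, mul_one]
  rw [euler, mkDerivation_monomial, Finsupp.sum, Finset.sum_congr rfl hX, ← Finset.sum_smul,
    smul_comm, smul_monomial a, smul_eq_mul, mul_one, Finsupp.degree_apply, Nat.cast_sum]

lemma euler_eq_smul_of_isHomogeneous {G : MvPolynomial σ R} {n : ℕ} (hG : G.IsHomogeneous n) :
    euler G = (n : R) • G := by
  rw [G.as_sum, map_sum, Finset.smul_sum]
  refine Finset.sum_congr rfl fun s hs => ?_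
  have hdegree : s.degree = n := by
    rw [Finsupp.degree_eq_weight_one]
    exact hG (mem_support_iff.mp hs)
  rw [euler_monomial, hdegree]

lemma euler_eq_sum [Fintype σ] (H : MvPolynomial σ R) :
    euler H = ∑ i, X i * pderiv i H := by
  induction H using MvPolynomial.induction_on' with
  | monomial s a =>
    simp_rw [X_mul_pderiv_monomial]
    rw [euler_monomial, ← Finset.sum_smul, ← Finsupp.degree_eq_sum, Nat.cast_smul_eq_nsmul]
  | add F H hF hH => simp_rw [map_add, mul_add, Finset.sum_add_distrib, hF, hH]

lemma euler_mul_of_eigenvector {b c : R} {F H : MvPolynomial σ R} (hF : euler F = b • F)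
    (hH : euler H = c • H) : euler (F * H) = (b + c) • (F * H) := by
  rw [Derivation.leibniz, hF, hH]
  simp only [smul_eq_mul, mul_smul_comm, mul_comm H F]
  module

lemma pderiv_eq_zero_of_isHomogeneous_zero {G : MvPolynomial σ R} (hG : G.IsHomogeneous 0)
    (i : σ) : pderiv i G = 0 := by
  rw [← totalDegree_zero_iff_isHomogeneous, totalDegree_eq_zero_iff_eq_C] at hG
  rw [hG, pderiv_C]

end Euler

section EulerPderiv

variable {R σ : Type*} [CommRing R]

lemma pderiv_euler (i : σ) (H : MvPolynomial σ R) :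
    pderiv i (euler H) = euler (pderiv i H) + pderiv i H := by
  have h : ⁅pderiv (R := R) i, euler (R := R) (σ := σ)⁆ = pderiv i := by
    refine derivation_ext fun j => ?_
    rcases eq_or_ne j i with rfl | hji
    · simp [Derivation.commutator_apply]
    · simp [Derivation.commutator_apply, pderiv_X_of_ne hji]
  have hH : pderiv i (euler H) - euler (pderiv i H) = pderiv i H := DFunLike.congr_fun h H
  exact sub_eq_iff_eq_add'.mp hH

lemma euler_pderiv_of_eigenvector {c : R} {H : MvPolynomial σ R} (hH : euler H = c • H) (i : σ) :
    euler (pderiv i H) = (c - 1) • pderiv i H := by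
  have h := pderiv_euler i H
  rw [hH, Derivation.map_smul] at h
  rw [sub_smul, one_smul, h, add_sub_cancel_right]

end EulerPderiv

section Omega

variable {R : Type*} [CommRing R] {c : R} {G H : MvPolynomial (Fin 4) R}

lemma Omega_add (F H : MvPolynomial (Fin 4) R) : Omega (F + H) = Omega F + Omega H := by
  simp only [Omega, map_add]
  ring

lemma Omega_smul (a : R) (H : MvPolynomial (Fin 4) R) : Omega (a • H) = a • Omega H := by
  simp only [Omega, Derivation.map_smul, smul_sub]

lemma iterate_Omega_zero (j : ℕ) : Omega^[j] (0 : MvPolynomial (Fin 4) R) = 0 :=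
  Function.iterate_fixed (by simp [Omega]) j

lemma Omega_eq_zero_of_isHomogeneous {n : ℕ} (hG : G.IsHomogeneous n) (hn : n < 2) :
    Omega G = 0 := by
  have hpderiv (i : Fin 4) : (pderiv i G).IsHomogeneous 0 := by
    simpa [show n - 1 = 0 by omega] using hG.pderiv (i := i)
  simp only [Omega, pderiv_eq_zero_of_isHomogeneous_zero (hpderiv _), sub_zero]

lemma iterate_Omega_eq_zero_of_isHomogeneous {n j : ℕ} (hG : G.IsHomogeneous n)
    (hn : n < 2 * j) : Omega^[j] G = 0 := by
  induction j generalizing n G with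
  | zero => omega
  | succ j ih =>
    rw [Function.iterate_succ_apply]
    rcases lt_or_ge n 2 with hn2 | hn2
    · rw [Omega_eq_zero_of_isHomogeneous hG hn2, iterate_Omega_zero]
    · have hOmega : (Omega G).IsHomogeneous (n - 1 - 1) := hG.pderiv.pderiv.sub hG.pderiv.pderiv
      exact ih hOmega (by omega)

lemma euler_Omega_of_eigenvector (hH : euler H = c • H) :
    euler (Omega H) = (c - 2) • Omega H := by
  have hpderiv (i j : Fin 4) :
      euler (pderiv i (pderiv j H)) = (c - 1 - 1) • pderiv i (pderiv j H) :=
    euler_pderiv_of_eigenvector (euler_pderiv_of_eigenvector hH j) i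
  rw [Omega, map_sub, hpderiv, hpderiv, ← smul_sub, sub_sub, one_add_one_eq_two]

lemma euler_iterate_Omega_of_eigenvector (hH : euler H = c • H) (j : ℕ) :
    euler (Omega^[j] H) = (c - 2 * j) • Omega^[j] H := by
  induction j with
  | zero => simpa using hH
  | succ j ih =>
    rw [Function.iterate_succ_apply', euler_Omega_of_eigenvector ih]
    congr 1
    push_cast
    ring

lemma euler_bracket : euler (bracket : MvPolynomial (Fin 4) R) = (2 : R) • bracket := by
  simp only [bracket, map_sub, Derivation.leibniz, euler_X, smul_eq_mul, two_smul]
  ring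

lemma euler_bracket_pow_mul_of_eigenvector (hH : euler H = c • H) (m : ℕ) :
    euler (bracket ^ m * H) = (c + 2 * m) • (bracket ^ m * H) := by
  induction m with
  | zero => simpa using hH
  | succ m ih =>
    rw [pow_succ', mul_assoc, euler_mul_of_eigenvector euler_bracket ih]
    congr 1
    push_cast
    ring

lemma Omega_bracket_mul (H : MvPolynomial (Fin 4) R) :
    Omega (bracket * H) = bracket * Omega H + euler H + (2 : R) • H := by
  simp only [euler_eq_sum, Fin.sum_univ_four, Omega, bracket, map_add, map_sub, map_zero,
    Derivation.leibniz, Derivation.map_one_eq_zero, smul_eq_mul, two_smul, pderiv_X,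
    Pi.single_apply, Fin.reduceEq, zero_ne_one, one_ne_zero, ↓reduceIte]
  ring

lemma iterate_Omega_bracket_mul_of_eigenvector (hH : euler H = c • H) (j : ℕ) :
    Omega^[j + 1] (bracket * H) =
      bracket * Omega^[j + 1] H + ((j + 1) * (c + 2 - j)) • Omega^[j] H := by
  induction j with
  | zero =>
    simp only [zero_add, Function.iterate_one, Function.iterate_zero, id, Omega_bracket_mul, hH]
    module
  | succ j ih =>
    rw [Function.iterate_succ_apply', ih, Omega_add, Omega_smul, Omega_bracket_mul,
      euler_iterate_Omega_of_eigenvector hH, ← Function.iterate_succ_apply' Omega,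
      ← Function.iterate_succ_apply' Omega]
    module

end Omega

section Evaluation

variable {R : Type*} [CommRing R] {c : R} {G H : MvPolynomial (Fin 4) R}

lemma substU_bracket : substU (bracket : MvPolynomial (Fin 4) R) = 0 := by
  simp [substU, bracket]

lemma substU_iterate_Omega_bracket_mul_of_eigenvector (hH : euler H = c • H) (j : ℕ) :
    substU (Omega^[j + 1] (bracket * H)) =
      ((j + 1) * (c + 2 - j)) • substU (Omega^[j] H) := by
  rw [iterate_Omega_bracket_mul_of_eigenvector hH, map_add, map_mul, substU_bracket, zero_mul,
    zero_add, map_smul]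

lemma descPochhammer_succ_eval_left (m : ℕ) (a : R) :
    (descPochhammer R (m + 1)).eval a = a * (descPochhammer R m).eval (a - 1) := by
  simp [descPochhammer_succ_left]

/-- For `ℓ < m` the subtraction `ℓ - m` is truncated, but then `ℓ.descFactorial m` vanishes. -/
theorem omega_evaluation_lemma_general (hG : euler G = c • G) (ℓ m : ℕ) :
    substU (Omega^[ℓ] (bracket ^ m * G)) =
      (ℓ.descFactorial m * (descPochhammer R m).eval (c + 2 * m + 1 - ℓ)) •
        substU (Omega^[ℓ - m] G) := by
  induction m generalizing ℓ with
  | zero => simp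
  | succ m ih =>
    cases ℓ with
    | zero => simp [substU_bracket]
    | succ j =>
      rw [pow_succ', mul_assoc, substU_iterate_Omega_bracket_mul_of_eigenvector
        (euler_bracket_pow_mul_of_eigenvector hG m), ih, smul_smul, Nat.succ_descFactorial_succ,
        descPochhammer_succ_eval_left, Nat.add_sub_add_right]
      have harg : c + 2 * (m + 1 : ℕ) + 1 - (j + 1 : ℕ) = c + 2 * m + 2 - j := by
        push_cast
        ring
      have harg_sub_one : c + 2 * m + 2 - j - 1 = c + 2 * m + 1 - j := by ring
      rw [harg, harg_sub_one]
      congr 1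
      push_cast
      ring

end Evaluation

lemma Bihomogeneous.isHomogeneous {R : Type*} [CommRing R] {G : MvPolynomial (Fin 4) R} {p q : ℕ}
    (hG : Bihomogeneous G p q) : G.IsHomogeneous (p + q) := by
  have hweights : (1 : Fin 4 → ℕ) = ![1, 1, 0, 0] + ![0, 0, 1, 1] := by decide
  intro d hd
  rw [← hG.1 hd, ← hG.2 hd, hweights]
  simp only [Finsupp.weight_apply, Pi.add_apply, smul_add, Finsupp.sum_add]

lemma mu_eq_descFactorial_mul {p q ℓ m : ℕ} (hmℓ : m ≤ ℓ) (hℓ : ℓ ≤ p + q + m + 1) :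
    mu p q ℓ m = (ℓ.descFactorial m * (p + q + 2 * m + 1 - ℓ).descFactorial m : ℕ) := by
  have hsub : p + q + m + 1 - ℓ = p + q + 2 * m + 1 - ℓ - m := by omega
  have hle : m ≤ p + q + 2 * m + 1 - ℓ := by omega
  rw [mu, hsub, ← Nat.factorial_mul_descFactorial hmℓ, ← Nat.factorial_mul_descFactorial hle]
  push_cast
  field_simp

/-- For `ℓ - m > p + q` the factorial arguments in `mu` may be truncated, but then `Ω^(ℓ - m)`
annihilates `G`. -/
lemma mu_smul_iterate_Omega {k : Type*} [Field k] {G : MvPolynomial (Fin 4) k} {p q ℓ m : ℕ}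
    (hG : G.IsHomogeneous (p + q)) (hmℓ : m ≤ ℓ) :
    (mu p q ℓ m : k) • Omega^[ℓ - m] G =
      (ℓ.descFactorial m * (descPochhammer k m).eval (((p + q : ℕ) : k) + 2 * m + 1 - ℓ)) •
        Omega^[ℓ - m] G := by
  rcases le_or_gt ℓ (p + q + m) with hℓ | hℓ
  · have harg : ((p + q : ℕ) : k) + 2 * m + 1 - ℓ = (p + q + 2 * m + 1 - ℓ : ℕ) := by
      rw [Nat.cast_sub (by omega)]
      push_cast
      rfl
    rw [mu_eq_descFactorial_mul hmℓ (by omega), harg, descPochhammer_eval_eq_descFactorial,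
      Rat.cast_natCast, Nat.cast_mul]
  · rw [iterate_Omega_eq_zero_of_isHomogeneous hG (by omega), smul_zero, smul_zero]

/-- Evaluation lemma: for `𝒢` bihomogeneous of orders `(p,q)`, if `ℓ ≥ m` then
`σ(Ω_{xy}^ℓ((x y)^m·𝒢)) = μ(p,q;ℓ,m)·σ(Ω_{xy}^{ℓ−m}𝒢)`, and if `ℓ < m` then
`σ(Ω_{xy}^ℓ((x y)^m·𝒢)) = 0`. -/
theorem omega_evaluation_lemma {k : Type*} [Field k] [CharZero k]
    (G : MvPolynomial (Fin 4) k) (p q ℓ m : ℕ)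
    (hG : Bihomogeneous G p q) :
    (m ≤ ℓ →
      substU (Omega^[ℓ] (bracket ^ m * G))
        = C ((mu p q ℓ m : ℚ) : k) * substU (Omega^[ℓ - m] G))
    ∧ (ℓ < m → substU (Omega^[ℓ] (bracket ^ m * G)) = 0) := by
  have hG_homog := hG.isHomogeneous
  have heval := omega_evaluation_lemma_general (euler_eq_smul_of_isHomogeneous hG_homog) ℓ m
  refine ⟨fun hmℓ => ?_, fun hℓm => ?_⟩
  · rw [heval, C_mul', ← map_smul, ← map_smul, mu_smul_iterate_Omega hG_homog hmℓ]
  · rw [heval, Nat.descFactorial_of_lt hℓm, Nat.cast_zero, zero_mul, zero_smul]
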